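/- Fix n ≥ 0 and let C be the chain complex of abelian groups in nonnegative degrees with C_p the free abelian group on the set of strictly increasing tuples (i_0 < i_1 < … < i_p) of elements of {0, …, n}, with differential d(i_0, …, i_p) = Σ_{l=0}^{p} (−1)^l (i_0, …, î_l, …, i_p) for p ≥ 1 (where î_l means that i_l is omitted) and d = 0 in degree 0. Define a degree-0 map f : C → C by f(i_0) = (i_0) in degree 0, f(i_0, i_1) = Σ_{i_0 < k ≤ i_1} (k−1, k) in degree 1, and f = 0 in degrees ≥ 2, and a degree +1 map h : C_p → C_{p+1} by h(i_0) = 0 and, for p ≥ 1, h(i_0, …, i_p) = Σ_{i_0 < k < i_1} (k−1, k, i_1, …, i_p). Then: (1) f is a chain map, i.e. d ∘ f = f ∘ d; (2) h is a chain homotopy from the identity of C to f, i.e. d ∘ h + h ∘ d = f − id in every degree; (3) h sends chains all of whose coefficients are nonnegative to chains all of whose coefficients are nonnegative. -/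

import Mathlib

namespace Paper

/-- Strictly increasing `(p+1)`-tuples `(i_0 < i_1 < … < i_p)` of elements of
`{0, …, n}`. -/
def Tup (n p : ℕ) : Type :=
  { f : Fin (p + 1) → Fin (n + 1) // StrictMono f }

instance (n p : ℕ) : DecidablePred (fun f : Fin (p + 1) → Fin (n + 1) => StrictMono f) :=
  fun f => decidable_of_iff (∀ i j, i < j → f i < f j)
    ⟨fun h _ _ hij => h _ _ hij, fun h _ _ hij => h hij⟩

instance (n p : ℕ) : Fintype (Tup n p) :=
  Subtype.fintype _

instance (n p : ℕ) : DecidableEq (Tup n p) :=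
  Subtype.instDecidableEq

/-- The degree-`p` part of the chain complex `C`: the free abelian group on the set of
strictly increasing `(p+1)`-tuples in `{0, …, n}`, realized as the group of
`ℤ`-valued functions on this (finite) set of tuples. -/
def Ch (n p : ℕ) : Type :=
  Tup n p → ℤ

instance (n p : ℕ) : AddCommGroup (Ch n p) :=
  inferInstanceAs (AddCommGroup (Tup n p → ℤ))

/-- The basis element of `Ch n p` corresponding to a tuple `σ`. -/
def basis {n p : ℕ} (σ : Tup n p) : Ch n p :=
  fun τ => if τ = σ then 1 else 0

/-- The `l`-th face of a tuple: `(i_0, …, î_l, …, i_p)`, omitting `i_l`. -/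
def face {n p : ℕ} (l : Fin (p + 2)) (σ : Tup n (p + 1)) : Tup n p :=
  ⟨σ.1 ∘ l.succAbove, σ.2.comp (Fin.strictMono_succAbove l)⟩

/-- The differential `d : C_{p+1} → C_p`,
`d(i_0, …, i_{p+1}) = ∑_l (-1)^l (i_0, …, î_l, …, i_{p+1})`. -/
def dChain (n p : ℕ) : Ch n (p + 1) → Ch n p :=
  fun x => ∑ σ : Tup n (p + 1), ∑ l : Fin (p + 2), (x σ * (-1) ^ (l : ℕ)) • basis (face l σ)

/-- The tuple `(k - 1, k)`, for `0 < k`. -/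
def pairTup (n : ℕ) (k : Fin (n + 1)) (hk : 0 < (k : ℕ)) : Tup n 1 :=
  ⟨fun j => if (j : ℕ) = 0 then ⟨(k : ℕ) - 1, by omega⟩ else k, by
    intro a b hab
    have hab' : (a : ℕ) < (b : ℕ) := hab
    have hb : (b : ℕ) < 2 := b.isLt
    have ha0 : (a : ℕ) = 0 := by omega
    have hb1 : (b : ℕ) = 1 := by omega
    dsimp only
    rw [if_pos ha0, if_neg (by omega)]
    exact Fin.mk_lt_of_lt_val (by omega)⟩

/-- The chain map `f : C → C`: the identity in degree `0`,
`f(i_0, i_1) = ∑_{i_0 < k ≤ i_1} (k-1, k)` in degree `1`, and `0` in degrees `≥ 2`. -/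
def fChain (n : ℕ) : ∀ p, Ch n p → Ch n p
  | 0 => id
  | 1 => fun x => ∑ σ : Tup n 1, ∑ k : Fin (n + 1),
      if h : σ.1 ⟨0, by omega⟩ < k ∧ k ≤ σ.1 ⟨1, by omega⟩ then
        (x σ) • basis (pairTup n k (Nat.lt_of_le_of_lt (Nat.zero_le _) h.1))
      else 0
  | _ + 2 => fun _ => 0

/-- The underlying map of the tuple `(k - 1, k, i_1, …, i_p)` obtained from
`σ = (i_0, …, i_p)` and `k`. -/
def hTupFun {n p : ℕ} (σ : Tup n (p + 1)) (k : Fin (n + 1)) :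
    Fin (p + 3) → Fin (n + 1) :=
  fun j => if (j : ℕ) = 0 then ⟨(k : ℕ) - 1, by omega⟩
    else if (j : ℕ) = 1 then k
    else σ.1 ⟨(j : ℕ) - 1, by omega⟩

/-- The tuple `(k - 1, k, i_1, …, i_p)` obtained from `σ = (i_0, …, i_p)` and
`i_0 < k < i_1`. -/
def hTup {n p : ℕ} (σ : Tup n (p + 1)) (k : Fin (n + 1))
    (h₁ : σ.1 ⟨0, by omega⟩ < k) (h₂ : k < σ.1 ⟨1, by omega⟩) : Tup n (p + 2) := by
  refine ⟨hTupFun σ k, ?_⟩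
  have hk : 0 < (k : ℕ) := Nat.lt_of_le_of_lt (Nat.zero_le _) h₁
  rw [Fin.strictMono_iff_lt_succ]
  intro i
  unfold hTupFun
  rcases Nat.lt_or_ge (i : ℕ) 1 with h0 | h0
  · have c1 : ((i.castSucc : Fin (p + 3)) : ℕ) = 0 := by
      simp only [Fin.coe_castSucc]; omega
    have c2 : ((i.succ : Fin (p + 3)) : ℕ) = 1 := by
      simp only [Fin.val_succ]; omega
    rw [if_pos c1, if_neg (by omega), if_pos c2]
    exact Fin.mk_lt_of_lt_val (by omega)
  · rcases Nat.lt_or_ge (i : ℕ) 2 with h1 | h1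
    · have c1 : ((i.castSucc : Fin (p + 3)) : ℕ) = 1 := by
        simp only [Fin.coe_castSucc]; omega
      have c2 : ((i.succ : Fin (p + 3)) : ℕ) = 2 := by
        simp only [Fin.val_succ]; omega
      rw [if_neg (by omega), if_pos c1, if_neg (by omega), if_neg (by omega)]
      refine lt_of_lt_of_le h₂ (σ.2.monotone ?_)
      simp only [Fin.le_def]
      omega
    · have c1 : ¬ ((i.castSucc : Fin (p + 3)) : ℕ) = 0 := by
        simp only [Fin.coe_castSucc]; omega
      have c1' : ¬ ((i.castSucc : Fin (p + 3)) : ℕ) = 1 := by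
        simp only [Fin.coe_castSucc]; omega
      have c2 : ¬ ((i.succ : Fin (p + 3)) : ℕ) = 0 := by
        simp only [Fin.val_succ]; omega
      have c2' : ¬ ((i.succ : Fin (p + 3)) : ℕ) = 1 := by
        simp only [Fin.val_succ]; omega
      rw [if_neg c1, if_neg c1', if_neg c2, if_neg c2']
      apply σ.2
      simp only [Fin.lt_def, Fin.coe_castSucc, Fin.val_succ]
      omega

/-- The homotopy `h : C_p → C_{p+1}`: `h(i_0) = 0` in degree `0` and
`h(i_0, …, i_p) = ∑_{i_0 < k < i_1} (k-1, k, i_1, …, i_p)` in degrees `≥ 1`. -/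
def hChain (n : ℕ) : ∀ p, Ch n p → Ch n (p + 1)
  | 0 => fun _ => 0
  | p + 1 => fun x => ∑ σ : Tup n (p + 1), ∑ k : Fin (n + 1),
      if h : σ.1 ⟨0, by omega⟩ < k ∧ k < σ.1 ⟨1, by omega⟩ then
        (x σ) • basis (hTup σ k h.1 h.2)
      else 0

/-!
For `a ≤ b` consider the chain `stairs a b w = ∑_{a < k ≤ b} (k - 1, k, w)`, the edges of the path
`a, a + 1, …, b` joined with `w`. Since degenerate simplices vanish, `f (a, b) = stairs a b ∅` and
`h (a, b, w) = stairs a b (b, w)`. Telescoping the faces that omit `k - 1` or `k` gives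
`d (stairs a b w) = (b, w) - (a, w) + ∑ᵢ (-1)ⁱ stairs a b (w without its i-th entry)`, and both
identities follow from this formula together with `stairs a b w + stairs b c w = stairs a c w`.
-/

section AltFaceSum

variable {α : Type*} {A B : Type*} [AddCommGroup A] [AddCommGroup B]

/-- The alternating sum `∑ᵢ (-1)ⁱ g(L without its i-th entry)`. With `g` the inclusion of
basis elements it is the simplicial boundary of `L`; letting `g` vary allows peeling off the
leading vertices. -/
def altFaceSum (g : List α → A) (L : List α) : A :=
  ∑ i ∈ Finset.range L.length, (-1 : ℤ) ^ i • g (L.eraseIdx i)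

@[simp]
theorem altFaceSum_nil (g : List α → A) : altFaceSum g [] = 0 := by
  simp [altFaceSum]

@[simp]
theorem altFaceSum_cons (g : List α → A) (a : α) (L : List α) :
    altFaceSum g (a :: L) = g L - altFaceSum (fun u => g (a :: u)) L := by
  simp [altFaceSum, Finset.sum_range_succ', pow_succ, sub_eq_neg_add]

@[simp]
theorem altFaceSum_zero (L : List α) : altFaceSum (fun _ => (0 : A)) L = 0 := by
  simp [altFaceSum]

theorem map_altFaceSum {F : Type*} [FunLike F A B] [AddMonoidHomClass F A B] (φ : F)
    (g : List α → A) (L : List α) : φ (altFaceSum g L) = altFaceSum (fun u => φ (g u)) L := by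
  simp [altFaceSum]

theorem sum_altFaceSum {ι : Type*} (s : Finset ι) (g : ι → List α → A) (L : List α) :
    ∑ k ∈ s, altFaceSum (g k) L = altFaceSum (fun u => ∑ k ∈ s, g k u) L := by
  simp only [altFaceSum, Finset.smul_sum]
  exact Finset.sum_comm

theorem altFaceSum_eq_zero_of_not_sortedLT [PartialOrder α] {g : List α → A}
    (hg : ∀ L, ¬ L.SortedLT → g L = 0) {L : List α} (hle : L.SortedLE) (hlt : ¬ L.SortedLT) :
    altFaceSum g L = 0 := by
  induction L generalizing g with
  | nil => simp
  | cons a L ih =>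
    rw [List.sortedLE_iff_pairwise, List.pairwise_cons] at hle
    by_cases hL : L.SortedLT
    · obtain - | ⟨b, L⟩ := L
      · exact absurd (List.pairwise_singleton _ a).sortedLT hlt
      have hab : a = b := by
        rw [List.sortedLT_iff_isChain, List.isChain_cons_cons, ← List.sortedLT_iff_isChain] at hlt
        exact eq_of_le_of_not_lt (hle.1 b (by simp)) fun h => hlt ⟨h, hL⟩
      subst hab
      have hdup (u : List α) : g (a :: a :: u) = 0 :=
        hg _ (by simp [List.sortedLT_iff_isChain])
      -- The faces omitting one of the two equal vertices cancel; all others contain both.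
      simp only [altFaceSum_cons, hdup, altFaceSum_zero, sub_zero, sub_self]
    · have hcons (u : List α) (hu : ¬ u.SortedLT) : g (a :: u) = 0 :=
        hg _ fun h => hu h.pairwise.of_cons.sortedLT
      rw [altFaceSum_cons, hg L hL, ih hcons hle.2.sortedLE hL, sub_zero]

end AltFaceSum

section Sums

variable {A : Type*}

theorem sum_Ioc_sub_pred [AddCommGroup A] (g : ℕ → A) {a b : ℕ} (h : a ≤ b) :
    ∑ k ∈ Finset.Ioc a b, (g k - g (k - 1)) = g b - g a := by
  rw [← Finset.sum_Ico_sub g h, ← Finset.Ico_add_one_add_one_eq_Ioc, ← Finset.sum_Ico_add']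
  simp

theorem sum_dite_mem_map_valEmbedding [AddCommMonoid A] {m : ℕ} {P : Fin m → Prop}
    [DecidablePred P] {s : Finset (Fin m)} (hs : ∀ k, P k ↔ k ∈ s) {G : ∀ k, P k → A}
    {g : ℕ → A} (hg : ∀ k h, G k h = g k) :
    (∑ k, if h : P k then G k h else 0) = ∑ k ∈ s.map Fin.valEmbedding, g k := by
  simp [hg, hs]

end Sums

section Simplex

variable {n p : ℕ}

/-- The list of vertices of a tuple. -/
def Tup.toList (σ : Tup n p) : List ℕ :=
  List.ofFn fun j => (σ.1 j : ℕ)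

theorem Tup.length_toList (σ : Tup n p) : σ.toList.length = p + 1 :=
  List.length_ofFn

theorem Tup.toList_injective : Function.Injective (Tup.toList : Tup n p → List ℕ) := by
  intro σ τ h
  refine Subtype.ext (funext fun j => Fin.ext ?_)
  exact congrFun (List.ofFn_injective h) j

theorem Tup.mem_range_toList {L : List ℕ} :
    L ∈ Set.range (Tup.toList : Tup n p → List ℕ) ↔
      L.length = p + 1 ∧ L.SortedLT ∧ ∀ i ∈ L, i ≤ n := by
  constructor
  · rintro ⟨σ, rfl⟩
    refine ⟨σ.length_toList, ?_, ?_⟩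
    · exact List.sortedLT_ofFn_iff.mpr fun _ _ h => σ.2 h
    · exact List.forall_mem_ofFn_iff.mpr fun j => Nat.lt_succ_iff.mp (σ.1 j).isLt
  · rintro ⟨hlen, hlt, hn⟩
    refine ⟨⟨fun j => ⟨L[j], Nat.lt_succ_iff.mpr (hn _ (List.getElem_mem _))⟩, ?_⟩, ?_⟩
    · exact fun _ _ h => hlt.getElem_lt_getElem_of_lt h
    · exact List.ext_getElem (by simp [toList, hlen]) (by simp [toList, -List.ofFn_succ])

theorem Tup.toList_face (l : Fin (p + 2)) (σ : Tup n (p + 1)) :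
    (face l σ).toList = σ.toList.eraseIdx l := by
  refine List.ext_getElem (by simp [toList, List.length_eraseIdx, l.is_le]) fun i _ _ => ?_
  by_cases h : i < (l : ℕ) <;>
    simp [toList, face, List.getElem_eraseIdx, Fin.succAbove, Fin.lt_def, h, -List.ofFn_succ]

theorem Tup.toList_pairTup (k : Fin (n + 1)) (hk : 0 < (k : ℕ)) :
    (pairTup n k hk).toList = [(k : ℕ) - 1, (k : ℕ)] := by
  simp [toList, pairTup]

theorem Tup.toList_hTup (σ : Tup n (p + 1)) (k : Fin (n + 1))
    (h₁ : σ.1 ⟨0, by omega⟩ < k) (h₂ : k < σ.1 ⟨1, by omega⟩) :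
    (hTup σ k h₁ h₂).toList = ((k : ℕ) - 1) :: k :: σ.toList.tail := by
  simp [toList, hTup, hTupFun]

/-- The basis element of `Ch n p` with vertices `L`, extended by `0` to those lists `L` of
natural numbers that are not the vertices of a tuple, degenerate simplices in particular. -/
def simplex (n p : ℕ) (L : List ℕ) : Ch n p :=
  fun τ => if τ.toList = L then 1 else 0

theorem simplex_toList (σ : Tup n p) : simplex n p σ.toList = basis σ := by
  funext τ
  simp only [simplex, basis, Tup.toList_injective.eq_iff]

theorem simplex_of_notMem_range {L : List ℕ}
    (hL : L ∉ Set.range (Tup.toList : Tup n p → List ℕ)) : simplex n p L = 0 :=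
  funext fun τ => if_neg fun h => hL ⟨τ, h⟩

theorem simplex_of_length_ne {L : List ℕ} (hL : L.length ≠ p + 1) : simplex n p L = 0 :=
  simplex_of_notMem_range fun h => hL (Tup.mem_range_toList.mp h).1

theorem simplex_of_not_sortedLT {L : List ℕ} (hL : ¬ L.SortedLT) : simplex n p L = 0 :=
  simplex_of_notMem_range fun h => hL (Tup.mem_range_toList.mp h).2.1

/-- The tuples as a `ℤ`-basis of `Ch n p`. -/
noncomputable def chBasis (n p : ℕ) : Module.Basis (Tup n p) ℤ (Ch n p) :=
  Pi.basisFun ℤ (Tup n p)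

theorem chBasis_apply (σ : Tup n p) : chBasis n p σ = basis σ := by
  funext τ
  exact (congrFun (Pi.basisFun_apply ℤ (Tup n p) σ) τ).trans (Pi.single_apply σ 1 τ)

theorem chBasis_constr_apply {A : Type*} [AddCommGroup A] (F : Tup n p → A) (x : Ch n p) :
    (chBasis n p).constr ℤ F x = ∑ σ, x σ • F σ :=
  (chBasis n p).constr_apply_fintype ℤ F x

theorem linearMap_ext_simplex {A : Type*} [AddCommGroup A] {φ ψ : Ch n p →ₗ[ℤ] A}
    (h : ∀ L : List ℕ, L.length = p + 1 → L.SortedLT → (∀ i ∈ L, i ≤ n) →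
      φ (simplex n p L) = ψ (simplex n p L)) : φ = ψ := by
  refine (chBasis n p).ext fun σ => ?_
  obtain ⟨hlen, hlt, hn⟩ := Tup.mem_range_toList.mp ⟨σ, rfl⟩
  rw [chBasis_apply, ← simplex_toList]
  exact h _ hlen hlt hn

end Simplex

section Maps

variable {n p : ℕ}

/-- The differential `dChain` as a linear map. -/
noncomputable def dHom (n p : ℕ) : Ch n (p + 1) →ₗ[ℤ] Ch n p :=
  (chBasis n (p + 1)).constr ℤ fun σ => ∑ l : Fin (p + 2), (-1 : ℤ) ^ (l : ℕ) • basis (face l σ)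

/-- The map `fChain` as a linear map. -/
noncomputable def fHom (n : ℕ) : ∀ p, Ch n p →ₗ[ℤ] Ch n p
  | 0 => LinearMap.id
  | 1 => (chBasis n 1).constr ℤ fun σ => ∑ k : Fin (n + 1),
      if h : σ.1 ⟨0, by omega⟩ < k ∧ k ≤ σ.1 ⟨1, by omega⟩ then
        basis (pairTup n k (Nat.lt_of_le_of_lt (Nat.zero_le _) h.1))
      else 0
  | _ + 2 => 0

/-- The homotopy `hChain` as a linear map. -/
noncomputable def hHom (n : ℕ) : ∀ p, Ch n p →ₗ[ℤ] Ch n (p + 1)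
  | 0 => 0
  | p + 1 => (chBasis n (p + 1)).constr ℤ fun σ => ∑ k : Fin (n + 1),
      if h : σ.1 ⟨0, by omega⟩ < k ∧ k < σ.1 ⟨1, by omega⟩ then basis (hTup σ k h.1 h.2) else 0

theorem fHom_add_two (n p : ℕ) : fHom n (p + 2) = 0 :=
  rfl

theorem coe_dHom (n p : ℕ) : ⇑(dHom n p) = dChain n p := by
  funext x
  simp only [dHom, dChain, chBasis_constr_apply, Finset.smul_sum, smul_smul]

theorem coe_fHom (n p : ℕ) : ⇑(fHom n p) = fChain n p := by
  funext x
  obtain - | - | p := p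
  · rfl
  · simp only [fHom, fChain, chBasis_constr_apply, Finset.smul_sum, smul_dite, smul_zero]
  · rfl

theorem coe_hHom (n p : ℕ) : ⇑(hHom n p) = hChain n p := by
  funext x
  obtain - | p := p
  · rfl
  · simp only [hHom, hChain, chBasis_constr_apply, Finset.smul_sum, smul_dite, smul_zero]

theorem dHom_basis (σ : Tup n (p + 1)) :
    dHom n p (basis σ) = altFaceSum (simplex n p) σ.toList := by
  rw [← chBasis_apply, dHom, Module.Basis.constr_basis, altFaceSum, Tup.length_toList,
    Finset.sum_range]
  simp only [← simplex_toList, Tup.toList_face]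

theorem dHom_simplex {L : List ℕ} (hle : L.SortedLE) (hn : ∀ i ∈ L, i ≤ n) :
    dHom n p (simplex n (p + 1) L) = altFaceSum (simplex n p) L := by
  by_cases hlt : L.SortedLT
  · by_cases hlen : L.length = p + 2
    · obtain ⟨σ, rfl⟩ := Tup.mem_range_toList.mpr ⟨hlen, hlt, hn⟩
      rw [simplex_toList, dHom_basis]
    · rw [simplex_of_length_ne hlen, map_zero, altFaceSum, Finset.sum_eq_zero]
      intro i hi
      have hi : i < L.length := Finset.mem_range.mp hi
      rw [simplex_of_length_ne (by rw [List.length_eraseIdx_of_lt hi]; omega), smul_zero]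
  · rw [simplex_of_not_sortedLT hlt, map_zero,
      altFaceSum_eq_zero_of_not_sortedLT (fun _ => simplex_of_not_sortedLT) hle hlt]

/-- The edges of the path `a, a + 1, …, b` joined with `w`: the chain
`∑_{a < k ≤ b} (k - 1, k, w)`. -/
def stairs (n p a b : ℕ) (w : List ℕ) : Ch n p :=
  ∑ k ∈ Finset.Ioc a b, simplex n p ((k - 1) :: k :: w)

theorem stairs_add_stairs {a b c : ℕ} (hab : a ≤ b) (hbc : b ≤ c) (w : List ℕ) :
    stairs n p a b w + stairs n p b c w = stairs n p a c w :=
  Finset.sum_Ioc_consecutive _ hab hbc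

theorem stairs_of_notMem_range {a b : ℕ} {w : List ℕ}
    (h : a :: b :: w ∉ Set.range (Tup.toList : Tup n p → List ℕ)) :
    stairs n (p + 1) a b (b :: w) = 0 := by
  refine Finset.sum_eq_zero fun k hk => simplex_of_notMem_range fun hk' => h ?_
  rw [Finset.mem_Ioc] at hk
  rw [Tup.mem_range_toList] at hk' ⊢
  simp only [List.length_cons, List.sortedLT_iff_isChain, List.isChain_cons_cons,
    List.forall_mem_cons] at hk' ⊢
  grind

theorem dHom_stairs {a b : ℕ} {w : List ℕ} (hab : a ≤ b) (hle : (b :: w).SortedLE)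
    (hn : ∀ i ∈ b :: w, i ≤ n) :
    dHom n p (stairs n (p + 1) a b w) =
      simplex n p (b :: w) - simplex n p (a :: w) + altFaceSum (stairs n p a b) w := by
  have hface (k : ℕ) (hk : k ∈ Finset.Ioc a b) :
      dHom n p (simplex n (p + 1) ((k - 1) :: k :: w)) =
        simplex n p (k :: w) - simplex n p ((k - 1) :: w) +
          altFaceSum (fun u => simplex n p ((k - 1) :: k :: u)) w := by
    rw [Finset.mem_Ioc] at hk
    simp only [List.sortedLE_iff_pairwise, List.pairwise_cons] at hle
    simp only [List.forall_mem_cons] at hn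
    rw [dHom_simplex]
    · simp only [altFaceSum_cons]
      abel
    · simp only [List.sortedLE_iff_pairwise, List.pairwise_cons, List.forall_mem_cons]
      grind
    · simp only [List.forall_mem_cons]
      grind
  rw [stairs, map_sum, Finset.sum_congr rfl hface, Finset.sum_add_distrib,
    sum_Ioc_sub_pred (fun k => simplex n p (k :: w)) hab, sum_altFaceSum]
  rfl

theorem fHom_basis (σ : Tup n 1) :
    fHom n 1 (basis σ) = stairs n 1 (σ.1 0) (σ.1 1) [] := by
  rw [← chBasis_apply, fHom, Module.Basis.constr_basis, stairs, ← Fin.map_valEmbedding_Ioc]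
  refine sum_dite_mem_map_valEmbedding (fun k => Finset.mem_Ioc.symm) fun k _ => ?_
  rw [← simplex_toList, Tup.toList_pairTup]

theorem fHom_simplex {a b : ℕ} (hb : b ≤ n) :
    fHom n 1 (simplex n 1 [a, b]) = stairs n 1 a b [] := by
  by_cases hL : [a, b] ∈ Set.range (Tup.toList : Tup n 1 → List ℕ)
  · obtain ⟨σ, hσ⟩ := hL
    obtain ⟨rfl, rfl⟩ : (σ.1 0 : ℕ) = a ∧ (σ.1 1 : ℕ) = b := by simpa [Tup.toList] using hσ
    rw [← hσ, simplex_toList, fHom_basis]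
  · have hab : b ≤ a := by
      by_contra! hab
      refine hL (Tup.mem_range_toList.mpr ⟨rfl, (List.pairwise_pair.mpr hab).sortedLT, ?_⟩)
      simpa using ⟨hab.le.trans hb, hb⟩
    rw [simplex_of_notMem_range hL, map_zero, stairs, Finset.Ioc_eq_empty hab.not_gt,
      Finset.sum_empty]

theorem hHom_basis (σ : Tup n (p + 1)) :
    hHom n (p + 1) (basis σ) = stairs n (p + 2) (σ.1 0) (σ.1 1) σ.toList.tail := by
  have hlt : (σ.1 0 : ℕ) < σ.1 1 := σ.2 Fin.zero_lt_one
  have hdegenerate : simplex n (p + 2) ((σ.1 1 - 1 : ℕ) :: σ.1 1 :: σ.toList.tail) = 0 :=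
    simplex_of_not_sortedLT (by simp [Tup.toList, List.sortedLT_iff_isChain])
  rw [stairs, ← Finset.sum_Ioo_add_eq_sum_Ioc hlt, hdegenerate, add_zero,
    ← chBasis_apply, hHom, Module.Basis.constr_basis, ← Fin.map_valEmbedding_Ioo]
  refine sum_dite_mem_map_valEmbedding (fun k => Finset.mem_Ioo.symm) fun k _ => ?_
  rw [← simplex_toList, Tup.toList_hTup]

theorem hHom_simplex (a b : ℕ) (w : List ℕ) :
    hHom n p (simplex n p (a :: b :: w)) = stairs n (p + 1) a b (b :: w) := by
  by_cases hL : a :: b :: w ∈ Set.range (Tup.toList : Tup n p → List ℕ)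
  · obtain ⟨σ, hσ⟩ := hL
    obtain - | p := p
    · simp [Tup.toList] at hσ
    obtain ⟨rfl, rfl, -⟩ : (σ.1 0 : ℕ) = a ∧ (σ.1 1 : ℕ) = b ∧ _ = w := by
      simpa [Tup.toList] using hσ
    rw [← hσ, simplex_toList, hHom_basis, hσ, List.tail_cons]
  · rw [simplex_of_notMem_range hL, map_zero, stairs_of_notMem_range hL]

theorem hHom_simplex_singleton (a : ℕ) : hHom n p (simplex n p [a]) = 0 := by
  obtain - | p := p
  · rfl
  · rw [simplex_of_length_ne (by simp), map_zero]

theorem dHom_comp_fHom (n p : ℕ) :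
    dHom n p ∘ₗ fHom n (p + 1) = fHom n p ∘ₗ dHom n p := by
  obtain - | - | p := p
  · refine linearMap_ext_simplex fun L hlen hlt hn => ?_
    obtain ⟨a, b, rfl⟩ := List.length_eq_two.mp hlen
    have hab : a < b := by simpa [List.sortedLT_iff_isChain] using hlt
    have hb : b ≤ n := hn b (by simp)
    rw [LinearMap.comp_apply, LinearMap.comp_apply, fHom_simplex hb,
      dHom_stairs hab.le (by simp [List.sortedLE_iff_isChain]) (by simpa using hb),
      dHom_simplex hlt.sortedLE hn]
    simp [fHom]
  · refine linearMap_ext_simplex fun L hlen hlt hn => ?_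
    obtain ⟨a, b, c, rfl⟩ := List.length_eq_three.mp hlen
    obtain ⟨hab, hbc⟩ : a < b ∧ b < c := by simpa [List.sortedLT_iff_isChain] using hlt
    have hc : c ≤ n := hn c (by simp)
    rw [LinearMap.comp_apply, LinearMap.comp_apply, dHom_simplex hlt.sortedLE hn]
    rw [fHom_add_two, LinearMap.zero_apply, map_zero]
    simp only [altFaceSum_cons, altFaceSum_nil, map_sub, fHom_simplex hc,
      fHom_simplex (hbc.le.trans hc), ← stairs_add_stairs hab.le hbc.le, sub_zero]
    abel
  · simp only [fHom_add_two, LinearMap.comp_zero, LinearMap.zero_comp]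

theorem dHom_comp_hHom_zero (n : ℕ) : dHom n 0 ∘ₗ hHom n 0 = fHom n 0 - LinearMap.id := by
  simp [hHom, fHom]

theorem dHom_hHom_simplex {a b : ℕ} {w : List ℕ} (hlt : (a :: b :: w).SortedLT)
    (hn : ∀ i ∈ a :: b :: w, i ≤ n) :
    dHom n p (hHom n p (simplex n p (a :: b :: w))) =
      stairs n p a b w - simplex n p (a :: b :: w) -
        altFaceSum (fun u => stairs n p a b (b :: u)) w := by
  obtain ⟨hab, hbw⟩ := List.isChain_cons_cons.mp hlt.sortedLE.isChain
  have hle : (b :: b :: w).SortedLE := (List.isChain_cons_cons.mpr ⟨le_rfl, hbw⟩).sortedLE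
  have hn' : ∀ i ∈ b :: b :: w, i ≤ n := by simpa using (List.forall_mem_cons.mp hn).2
  have hdup : simplex n p (b :: b :: w) = 0 :=
    simplex_of_not_sortedLT (by simp [List.sortedLT_iff_isChain])
  rw [hHom_simplex, dHom_stairs hab hle hn', hdup, altFaceSum_cons]
  abel

theorem hHom_dHom_simplex {a b : ℕ} {w : List ℕ} (hlt : (a :: b :: w).SortedLT)
    (hn : ∀ i ∈ a :: b :: w, i ≤ n) :
    hHom n p (dHom n p (simplex n (p + 1) (a :: b :: w))) =
      hHom n p (simplex n p (b :: w)) - hHom n p (simplex n p (a :: w)) +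
        altFaceSum (fun u => stairs n (p + 1) a b (b :: u)) w := by
  rw [dHom_simplex hlt.sortedLE hn]
  simp only [altFaceSum_cons, map_sub, map_altFaceSum, hHom_simplex]
  abel

theorem dHom_comp_hHom_add (n p : ℕ) :
    dHom n (p + 1) ∘ₗ hHom n (p + 1) + hHom n p ∘ₗ dHom n p = fHom n (p + 1) - LinearMap.id := by
  refine linearMap_ext_simplex fun L hlen hlt hn => ?_
  obtain - | ⟨a, - | ⟨b, w⟩⟩ := L
  · simp at hlen
  · simp at hlen
  simp only [LinearMap.add_apply, LinearMap.comp_apply, LinearMap.sub_apply, LinearMap.id_apply,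
    dHom_hHom_simplex hlt hn, hHom_dHom_simplex hlt hn]
  obtain - | ⟨c, w⟩ := w
  · obtain rfl : p = 0 := by simpa using hlen.symm
    simp [hHom_simplex_singleton, fHom_simplex (hn b (by simp))]
  · obtain - | p := p
    · simp at hlen
    obtain ⟨hab, hbc, -⟩ : a < b ∧ b < c ∧ _ := by
      simpa only [List.sortedLT_iff_isChain, List.isChain_cons_cons] using hlt
    rw [hHom_simplex, hHom_simplex, ← stairs_add_stairs hab.le hbc.le, fHom_add_two,
      LinearMap.zero_apply]
    abel

end Maps

section Nonneg

variable {n p : ℕ}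

/-- The chains all of whose coefficients are nonnegative. -/
def nonnegChains (n p : ℕ) : AddSubmonoid (Ch n p) where
  carrier := {x | ∀ σ, 0 ≤ x σ}
  zero_mem' _ := le_rfl
  add_mem' hx hy σ := add_nonneg (hx σ) (hy σ)

theorem smul_basis_mem_nonnegChains {c : ℤ} (hc : 0 ≤ c) (σ : Tup n p) :
    c • basis σ ∈ nonnegChains n p := by
  intro τ
  refine mul_nonneg hc ?_
  rw [basis]
  split_ifs <;> decide

theorem hChain_mem_nonnegChains {x : Ch n p} (hx : x ∈ nonnegChains n p) :
    hChain n p x ∈ nonnegChains n (p + 1) := by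
  obtain - | p := p
  · exact zero_mem _
  · refine sum_mem fun σ _ => sum_mem fun k _ => ?_
    split_ifs
    · exact smul_basis_mem_nonnegChains (hx σ) _
    · exact zero_mem _

end Nonneg

/-- With `C` the chain complex of abelian groups freely generated in degree `p` by the
strictly increasing `(p+1)`-tuples in `{0, …, n}`, with the alternating-sum
differential `d` (and `d = 0` in degree `0`), the map `f` (identity in degree `0`,
`f(i_0, i_1) = ∑_{i_0 < k ≤ i_1} (k-1, k)` in degree `1`, zero in degrees `≥ 2`) and the
map `h` (`h(i_0) = 0` and `h(i_0, …, i_p) = ∑_{i_0 < k < i_1} (k-1, k, i_1, …, i_p)` for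
`p ≥ 1`), we have: (1) `f` is a chain map, i.e. `d ∘ f = f ∘ d`; (2) `h` is a chain
homotopy from the identity of `C` to `f`, i.e. `d ∘ h + h ∘ d = f - id` in every degree;
(3) `h` sends chains all of whose coefficients are nonnegative to chains all of whose
coefficients are nonnegative. -/
theorem steiner_homotopy (n : ℕ) :
    (∀ p, dChain n p ∘ fChain n (p + 1) = fChain n p ∘ dChain n p) ∧
    (dChain n 0 ∘ hChain n 0 = fun x => fChain n 0 x - x) ∧
    (∀ p, (fun x => dChain n (p + 1) (hChain n (p + 1) x) + hChain n p (dChain n p x)) =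
      fun x => fChain n (p + 1) x - x) ∧
    (∀ p (x : Ch n p), (∀ σ, 0 ≤ x σ) → ∀ σ, 0 ≤ hChain n p x σ) := by
  refine ⟨fun p => ?_, ?_, fun p => ?_, fun p x hx => hChain_mem_nonnegChains hx⟩
  · simpa only [← coe_dHom, ← coe_fHom, LinearMap.coe_comp] using
      congrArg DFunLike.coe (dHom_comp_fHom n p)
  · simp only [← coe_dHom, ← coe_fHom, ← coe_hHom]
    exact congrArg DFunLike.coe (dHom_comp_hHom_zero n)
  · simp only [← coe_dHom, ← coe_fHom, ← coe_hHom]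
    exact congrArg DFunLike.coe (dHom_comp_hHom_add n p)

end Paper
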